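/- An annular continuum C ⊆ 𝔸 is a circloid if and only if (𝒰(C), ℒ(C)) is a reflexive pair of hemispheres, i.e. 𝒰(ℒ(C)) = 𝒰(C) and ℒ(𝒰(C)) = ℒ(C). -/

import Mathlib

open Filter Topology

local notation "⟪" x ", " y "⟫" => @inner ℝ _ _ x y

noncomputable section

/-- The open annulus `𝔸 = 𝕋¹ × ℝ`. -/
abbrev Ann := AddCircle (1 : ℝ) × ℝ

/-- `S ⊆ 𝔸` is unbounded from above in the `ℝ`-coordinate. -/
def UnbAbove (S : Set Ann) : Prop := ¬ BddAbove (Prod.snd '' S)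

/-- `S ⊆ 𝔸` is unbounded from below in the `ℝ`-coordinate. -/
def UnbBelow (S : Set Ann) : Prop := ¬ BddBelow (Prod.snd '' S)

/-- `S ⊆ 𝔸` is bounded (equivalently, bounded in the `ℝ`-coordinate). -/
def BoundedA (S : Set Ann) : Prop := BddAbove (Prod.snd '' S) ∧ BddBelow (Prod.snd '' S)

/-- `E ⊆ 𝔸` is essential: no connected component of its complement is unbounded both
above and below. -/
def EssentialA (E : Set Ann) : Prop :=
  ∀ x ∈ Eᶜ, ¬ (UnbAbove (connectedComponentIn Eᶜ x) ∧ UnbBelow (connectedComponentIn Eᶜ x))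

/-- An annular continuum: a compact connected set whose complement has exactly two
connected components, both unbounded. -/
def IsAnnularContinuum (E : Set Ann) : Prop :=
  IsCompact E ∧ IsConnected E ∧
  (∀ x ∈ Eᶜ, ¬ BoundedA (connectedComponentIn Eᶜ x)) ∧
  ∃ x y, x ∈ Eᶜ ∧ y ∈ Eᶜ ∧ connectedComponentIn Eᶜ x ≠ connectedComponentIn Eᶜ y ∧
    ∀ z ∈ Eᶜ, connectedComponentIn Eᶜ z = connectedComponentIn Eᶜ x ∨
      connectedComponentIn Eᶜ z = connectedComponentIn Eᶜ y

/-- A circloid: an annular continuum containing no strictly smaller annular continuum. -/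
def IsCircloidA (C : Set Ann) : Prop :=
  IsAnnularContinuum C ∧ ∀ E ⊆ C, IsAnnularContinuum E → E = C

/-- `ℒ(U)`: the connected component of `𝔸 \ cl(U)` unbounded from below (for a
generating set it is unique; in general we take the union of all components of
`𝔸 \ cl(U)` unbounded from below). -/
def lowerComp (U : Set Ann) : Set Ann :=
  {z | z ∈ (closure U)ᶜ ∧ UnbBelow (connectedComponentIn (closure U)ᶜ z)}

/-- `𝒰(L)`: the connected component of `𝔸 \ cl(L)` unbounded from above. -/
def upperComp (L : Set Ann) : Set Ann :=
  {z | z ∈ (closure L)ᶜ ∧ UnbAbove (connectedComponentIn (closure L)ᶜ z)}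

/-- An upper generating set: bounded from below with essential closure. -/
def UpperGen (U : Set Ann) : Prop := BddBelow (Prod.snd '' U) ∧ EssentialA (closure U)

/-- A lower generating set: bounded from above with essential closure. -/
def LowerGen (L : Set Ann) : Prop := BddAbove (Prod.snd '' L) ∧ EssentialA (closure L)

/-- `𝒞⁻(U) = 𝔸 \ (𝒰ℒ(U) ∪ ℒ𝒰ℒ(U))`. -/
def Cminus (U : Set Ann) : Set Ann :=
  (upperComp (lowerComp U) ∪ lowerComp (upperComp (lowerComp U)))ᶜ

/-- `𝒞⁺(L) = 𝔸 \ (ℒ𝒰(L) ∪ 𝒰ℒ𝒰(L))`. -/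
def Cplus (L : Set Ann) : Set Ann :=
  (lowerComp (upperComp L) ∪ upperComp (lowerComp (upperComp L)))ᶜ

/-!
If `X` and `Y` are connected closed sets covering the annulus and their intersection misses a
horizontal circle, then `X ∩ Y` is connected: a separation of `X ∩ Y` would yield a circle-valued
map which is null-homotopic, hence lifts to `ℝ`, while it winds once along a loop that runs through
`X` and returns through `Y`. Consequently `(U ∪ L)ᶜ` is an annular continuum whenever `U` and `L`
are disjoint connected open neighbourhoods of the two ends of the annulus with connected
complements.

Replacing `U` by the component `𝒰(L)` of `(closure L)ᶜ`, and then `L` by `ℒ(𝒰(L))`, enlarges such a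
pair and makes both complements connected, so minimality of `C` forces `𝒰(ℒ(C)) = 𝒰(C)`, and
symmetrically `ℒ(𝒰(C)) = ℒ(C)`. Conversely, the upper component of any annular continuum `E ⊆ C`
avoids the closure of `ℒ(C)`, so it lies in `𝒰(ℒ(C))`, and a reflexive pair cannot be enlarged.
-/

section Components

variable {Z : Type*} [TopologicalSpace Z] [LocallyConnectedSpace Z] [PreconnectedSpace Z]

lemma closure_connectedComponentIn_compl_inter_nonempty {K : Set Z} (hK : IsClosed K)
    (hne : K.Nonempty) {x : Z} (hx : x ∉ K) :
    (closure (connectedComponentIn Kᶜ x) ∩ K).Nonempty := by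
  by_contra hempty
  have hxG : x ∈ connectedComponentIn Kᶜ x := mem_connectedComponentIn hx
  have hclosed : closure (connectedComponentIn Kᶜ x) ⊆ connectedComponentIn Kᶜ x :=
    isPreconnected_connectedComponentIn.closure.subset_connectedComponentIn (subset_closure hxG)
      fun z hz hzK => hempty ⟨z, hz, hzK⟩
  have huniv : connectedComponentIn Kᶜ x = Set.univ :=
    IsClopen.eq_univ ⟨closure_subset_iff_isClosed.1 hclosed, hK.isOpen_compl.connectedComponentIn⟩
      ⟨x, hxG⟩
  obtain ⟨k, hk⟩ := hne
  exact connectedComponentIn_subset Kᶜ x (huniv ▸ Set.mem_univ k) hk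

lemma isPreconnected_compl_connectedComponentIn_compl {K : Set Z} (hK : IsClosed K)
    (hKc : IsConnected K) (x : Z) : IsPreconnected (connectedComponentIn Kᶜ x)ᶜ := by
  have hsub : K ⊆ (connectedComponentIn Kᶜ x)ᶜ := fun z hz h => connectedComponentIn_subset _ _ h hz
  obtain ⟨k, hk⟩ := hKc.nonempty
  refine isPreconnected_of_forall k fun y hy => ?_
  by_cases hyK : y ∈ K
  · exact ⟨K, hsub, hk, hyK, hKc.isPreconnected⟩
  have hdisj : Disjoint (connectedComponentIn Kᶜ y) (connectedComponentIn Kᶜ x) := by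
    refine Set.disjoint_left.2 fun z hzy hzx => hy ?_
    rw [connectedComponentIn_eq hzx, ← connectedComponentIn_eq hzy]
    exact mem_connectedComponentIn hyK
  obtain ⟨q, hqy, hqK⟩ := closure_connectedComponentIn_compl_inter_nonempty hK ⟨k, hk⟩ hyK
  exact ⟨closure (connectedComponentIn Kᶜ y) ∪ K,
    Set.union_subset
      (hdisj.closure_left hK.isOpen_compl.connectedComponentIn).subset_compl_right hsub,
    Or.inr hk, Or.inl (subset_closure (mem_connectedComponentIn hyK)),
    isPreconnected_connectedComponentIn.closure.union q hqy hqK hKc.isPreconnected⟩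

end Components

section Unicoherence

variable {Z : Type*} [TopologicalSpace Z]

lemma exists_lift_of_nullhomotopic {E B : Type*} [TopologicalSpace E] [TopologicalSpace B]
    {p : E → B} (hp : IsCoveringMap p) (hsurj : p.Surjective) {f : C(Z, B)}
    (hf : f.Nullhomotopic) : ∃ F : C(Z, E), ∀ z, p (F z) = f z := by
  obtain ⟨b, hfb⟩ := hf
  obtain ⟨H⟩ := hfb.symm
  obtain ⟨e, rfl⟩ := hsurj b
  let lift := hp.liftHomotopy H.toContinuousMap (.const Z e) H.apply_zero
  refine ⟨lift.curry 1, fun z => ?_⟩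
  exact (congrFun (hp.liftHomotopy_lifts H.toContinuousMap (.const Z e) H.apply_zero) (1, z)).trans
    (H.apply_one z)

lemma exists_continuousMap_eqOn_eqOn {B : Type*} [TopologicalSpace B] {X Y : Set Z}
    (hX : IsClosed X) (hY : IsClosed Y) (hXY : X ∪ Y = Set.univ) {f g : C(Z, B)}
    (hfg : Set.EqOn f g (X ∩ Y)) : ∃ h : C(Z, B), Set.EqOn h f X ∧ Set.EqOn h g Y := by
  classical
  have hleft : Set.EqOn (X.piecewise f g) f X := Set.piecewise_eqOn X f g
  have hright : Set.EqOn (X.piecewise f g) g Y := fun z hzY => by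
    by_cases hzX : z ∈ X
    · exact (hleft hzX).trans (hfg ⟨hzX, hzY⟩)
    · exact Set.piecewise_eq_of_notMem X f g hzX
  have hcont : Continuous (X.piecewise f g) := by
    rw [← continuousOn_univ, ← hXY]
    exact (f.continuous.continuousOn.congr hleft).union_of_isClosed
      (g.continuous.continuousOn.congr hright) hX hY
  exact ⟨⟨_, hcont⟩, hleft, hright⟩

variable {X Y K : Set Z} {r : C(Z, Z)}

lemma eq_of_mem_inter_of_eq_zero_or_one (hX : IsClosed X) (hY : IsClosed Y)
    (hXc : IsPreconnected X) (hYc : IsPreconnected Y) (hXY : X ∪ Y = Set.univ)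
    (hr : r.Homotopic (.id Z)) (hrK : ∀ z, r z ∈ K) {w : C(Z, ℝ)} (hwK : ∀ z ∈ K, w z = 0)
    (hw : ∀ z ∈ X ∩ Y, w z = 0 ∨ w z = 1) {a b : Z} (ha : a ∈ X ∩ Y) (hb : b ∈ X ∩ Y) :
    w a = w b := by
  have hcov := AddCircle.isCoveringMap_coe (1 : ℝ)
  let wCircle : C(Z, UnitAddCircle) := ⟨fun z => (w z : UnitAddCircle), hcov.continuous.comp w.2⟩
  have hw_circle : Set.EqOn wCircle (0 : C(Z, UnitAddCircle)) (X ∩ Y) := fun z hz => by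
    rcases hw z hz with h | h <;> simp [wCircle, h]
  obtain ⟨f, hfX, hfY⟩ := exists_continuousMap_eqOn_eqOn hX hY hXY hw_circle
  have hf_zero : ∀ z ∈ K, f z = 0 := fun z hz => by
    rcases hXY.ge (Set.mem_univ z) with h | h
    · simp [hfX h, wCircle, hwK z hz]
    · simp [hfY h]
  have hf_null : f.Nullhomotopic := by
    have hfr : f.comp r = .const Z 0 := ContinuousMap.ext fun z => hf_zero _ (hrK z)
    exact ⟨0, hfr ▸ (ContinuousMap.Homotopic.refl f).comp hr.symm⟩
  obtain ⟨F, hF⟩ := exists_lift_of_nullhomotopic hcov QuotientAddGroup.mk_surjective hf_null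
  have hconstX : F a - w a = F b - w b := by
    have hzero : ∀ z ∈ X, ((F z - w z : ℝ) : UnitAddCircle) = 0 := fun z hz => by
      rw [AddCircle.coe_sub, hF, hfX hz]
      exact sub_self _
    exact hcov.constOn_of_comp hXc (F - w).continuous.continuousOn
      (fun z hz z' hz' => (hzero z hz).trans (hzero z' hz').symm) ha.1 hb.1
  have hconstY : F a = F b :=
    hcov.constOn_of_comp hYc F.continuous.continuousOn
      (fun z hz z' hz' => by rw [hF, hF, hfY hz, hfY hz']; rfl) ha.2 hb.2
  linarith

theorem isPreconnected_inter_of_disjoint_of_homotopic_id [NormalSpace Z] (hX : IsClosed X)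
    (hY : IsClosed Y) (hXc : IsPreconnected X) (hYc : IsPreconnected Y)
    (hXY : X ∪ Y = Set.univ) (hK : IsClosed K) (hKXY : Disjoint K (X ∩ Y))
    (hr : r.Homotopic (.id Z)) (hrK : ∀ z, r z ∈ K) : IsPreconnected (X ∩ Y) := by
  have hI : IsClosed (X ∩ Y) := hX.inter hY
  rw [isPreconnected_iff_subset_of_fully_disjoint_closed hI]
  intro u v hu hv huv hdisj
  by_contra! ⟨hnot_u, hnot_v⟩
  obtain ⟨b, hb, hbu⟩ := Set.not_subset.1 hnot_u
  obtain ⟨a, ha, hav⟩ := Set.not_subset.1 hnot_v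
  obtain ⟨w, hw0, hw1, -⟩ := exists_continuous_zero_one_of_isClosed
    (hK.union (hI.inter hu)) (hI.inter hv)
    ((hKXY.mono_right Set.inter_subset_left).union_left
      (hdisj.mono Set.inter_subset_right Set.inter_subset_right))
  have hwI : ∀ z ∈ X ∩ Y, w z = 0 ∨ w z = 1 := fun z hz =>
    (huv hz).imp (fun hzu => hw0 (Or.inr ⟨hz, hzu⟩)) (fun hzv => hw1 ⟨hz, hzv⟩)
  have hwa : w a = 0 := hw0 (Or.inr ⟨ha, (huv ha).resolve_right hav⟩)
  have hwb : w b = 1 := hw1 ⟨hb, (huv hb).resolve_left hbu⟩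
  have hab : w a = w b :=
    eq_of_mem_inter_of_eq_zero_or_one hX hY hXc hYc hXY hr hrK (fun z hz => hw0 (Or.inl hz))
      hwI ha hb
  exact zero_ne_one (hwa.symm.trans (hab.trans hwb))

lemma id_prodMap_const_homotopic_id (A : Type*) [TopologicalSpace A] {V : Type*} [AddCommGroup V]
    [TopologicalSpace V] [IsTopologicalAddGroup V] [Module ℝ V] [ContinuousSMul ℝ V] (m : V) :
    ((ContinuousMap.id A).prodMap (.const V m)).Homotopic (.id (A × V)) :=
  (ContinuousMap.Homotopic.refl (.id A)).prodMap ⟨.affine (.const V m) (.id V)⟩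

end Unicoherence

section Ends

/-- A filter describes a (connected) end of a space if it is proper and has a basis of preconnected
sets. The motivating examples are the filters of neighbourhoods of the two ends of the annulus. -/
class IsConnectedEnd {Z : Type*} [TopologicalSpace Z] (e : Filter Z) : Prop extends NeBot e where
  exists_isPreconnected : ∀ s ∈ e, ∃ t ∈ e, t ⊆ s ∧ IsPreconnected t

/-- The union of the components of `(closure K)ᶜ` that reach the end `e`. For the two ends of the
annulus these are the sets `𝒰(K)` and `ℒ(K)`. -/
def endComponent {Z : Type*} [TopologicalSpace Z] (e : Filter Z) (K : Set Z) : Set Z :=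
  {z | z ∈ (closure K)ᶜ ∧ ∃ᶠ p in e, p ∈ connectedComponentIn (closure K)ᶜ z}

instance {B : Type*} [ConditionallyCompleteLinearOrder B] [DenselyOrdered B] [TopologicalSpace B]
    [OrderTopology B] [Nonempty B] : IsConnectedEnd (atTop : Filter B) where
  exists_isPreconnected _ hs :=
    let ⟨b, hb⟩ := mem_atTop_sets.1 hs
    ⟨Set.Ici b, Ici_mem_atTop b, hb, isPreconnected_Ici⟩

instance {B : Type*} [ConditionallyCompleteLinearOrder B] [DenselyOrdered B] [TopologicalSpace B]
    [OrderTopology B] [Nonempty B] : IsConnectedEnd (atBot : Filter B) where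
  exists_isPreconnected _ hs :=
    let ⟨b, hb⟩ := mem_atBot_sets.1 hs
    ⟨Set.Iic b, Iic_mem_atBot b, hb, isPreconnected_Iic⟩

instance {A B : Type*} [TopologicalSpace A] [ConnectedSpace A] [TopologicalSpace B]
    (e : Filter B) [IsConnectedEnd e] : IsConnectedEnd (comap (Prod.snd : A × B → B) e) where
  toNeBot := NeBot.comap_of_surj inferInstance Prod.snd_surjective
  exists_isPreconnected s hs := by
    obtain ⟨u, hue, hus⟩ := mem_comap.1 hs
    obtain ⟨t, hte, htu, ht⟩ := IsConnectedEnd.exists_isPreconnected u hue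
    exact ⟨Prod.snd ⁻¹' t, preimage_mem_comap hte, (Set.preimage_mono htu).trans hus,
      Set.univ_prod (t := t) ▸ isPreconnected_univ.prod ht⟩

lemma compl_mem_comap_snd_of_isCompact {A B : Type*} [TopologicalSpace A] [TopologicalSpace B]
    {e : Filter B} (he : e ≤ cocompact B) {C : Set (A × B)} (hC : IsCompact C) :
    Cᶜ ∈ comap Prod.snd e := by
  rw [mem_comap_iff_compl, compl_compl]
  exact he (hC.image continuous_snd).compl_mem_cocompact

variable {Z : Type*} [TopologicalSpace Z] {e : Filter Z} {K U : Set Z}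

lemma disjoint_endComponent : Disjoint (endComponent e K) K :=
  Set.disjoint_left.2 fun _ hz hzK => hz.1 (subset_closure hzK)

lemma endComponent_anti {K' : Set Z} (h : K ⊆ K') : endComponent e K' ⊆ endComponent e K := by
  have hcompl : (closure K')ᶜ ⊆ (closure K)ᶜ := Set.compl_subset_compl.2 (closure_mono h)
  exact fun z hz => ⟨hcompl hz.1, hz.2.mono fun _ hp => connectedComponentIn_mono z hcompl hp⟩

lemma subset_endComponent [NeBot e] (hU : IsPreconnected U) (hUe : U ∈ e)
    (hUK : Disjoint U (closure K)) : U ⊆ endComponent e K := fun _ hz =>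
  ⟨hUK.subset_compl_right hz, (Eventually.frequently hUe).mono fun _ hp =>
    hU.subset_connectedComponentIn hz hUK.subset_compl_right hp⟩

variable [IsConnectedEnd e]

lemma endComponent_mem (hK : (closure K)ᶜ ∈ e) : endComponent e K ∈ e := by
  obtain ⟨t, hte, htK, ht⟩ := IsConnectedEnd.exists_isPreconnected _ hK
  exact mem_of_superset hte
    (subset_endComponent ht hte (Set.subset_compl_iff_disjoint_right.1 htK))

lemma exists_endComponent_eq_connectedComponentIn (hK : (closure K)ᶜ ∈ e) :
    ∃ x, endComponent e K = connectedComponentIn (closure K)ᶜ x := by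
  obtain ⟨t, hte, htK, ht⟩ := IsConnectedEnd.exists_isPreconnected _ hK
  obtain ⟨x, hx⟩ := nonempty_of_mem hte
  have htx : t ⊆ connectedComponentIn (closure K)ᶜ x := ht.subset_connectedComponentIn hx htK
  refine ⟨x, Set.Subset.antisymm (fun z hz => ?_) fun z hz => ?_⟩
  · obtain ⟨q, hqz, hqt⟩ := (hz.2.and_eventually hte).exists
    rw [connectedComponentIn_eq (htx hqt), ← connectedComponentIn_eq hqz]
    exact mem_connectedComponentIn hz.1
  · refine ⟨connectedComponentIn_subset _ _ hz, ?_⟩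
    rw [← connectedComponentIn_eq hz]
    exact (Eventually.frequently hte).mono htx

lemma isPreconnected_endComponent (hK : (closure K)ᶜ ∈ e) : IsPreconnected (endComponent e K) := by
  obtain ⟨x, hx⟩ := exists_endComponent_eq_connectedComponentIn hK
  exact hx ▸ isPreconnected_connectedComponentIn

variable [LocallyConnectedSpace Z]

lemma isOpen_endComponent (hK : (closure K)ᶜ ∈ e) : IsOpen (endComponent e K) := by
  obtain ⟨x, hx⟩ := exists_endComponent_eq_connectedComponentIn hK
  exact hx ▸ isClosed_closure.isOpen_compl.connectedComponentIn

lemma isPreconnected_compl_endComponent [PreconnectedSpace Z] (hK : (closure K)ᶜ ∈ e)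
    (hKc : IsConnected K) : IsPreconnected (endComponent e K)ᶜ := by
  obtain ⟨x, hx⟩ := exists_endComponent_eq_connectedComponentIn hK
  exact hx ▸ isPreconnected_compl_connectedComponentIn_compl isClosed_closure hKc.closure x

end Ends

section HemispherePairs

lemma eq_and_eq_of_disjoint_of_union_eq {α : Type*} {U V U' V' : Set α} (hdisj : Disjoint U' V')
    (hU : U ⊆ U') (hV : V ⊆ V') (hunion : U' ∪ V' = U ∪ V) : U' = U ∧ V' = V :=
  ⟨hU.antisymm' fun _ hz => (hunion.subset (Or.inl hz)).resolve_right fun hzV =>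
      Set.disjoint_left.1 hdisj hz (hV hzV),
    hV.antisymm' fun _ hz => (hunion.subset (Or.inr hz)).resolve_left fun hzU =>
      Set.disjoint_left.1 hdisj (hU hzU) hz⟩

/-- A pair of hemispheres: disjoint preconnected open neighbourhoods `U` and `V` of two ends. -/
structure IsHemispherePair {Z : Type*} [TopologicalSpace Z] (e₁ e₂ : Filter Z)
    (U V : Set Z) : Prop where
  isOpen_left : IsOpen U
  isOpen_right : IsOpen V
  isPreconnected_left : IsPreconnected U
  isPreconnected_right : IsPreconnected V
  disjoint : Disjoint U V
  mem_left : U ∈ e₁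
  mem_right : V ∈ e₂

namespace IsHemispherePair

variable {Z : Type*} [TopologicalSpace Z] {e₁ e₂ : Filter Z} {U V U' V' : Set Z}

protected lemma symm (h : IsHemispherePair e₁ e₂ U V) : IsHemispherePair e₂ e₁ V U where
  isOpen_left := h.isOpen_right
  isOpen_right := h.isOpen_left
  isPreconnected_left := h.isPreconnected_right
  isPreconnected_right := h.isPreconnected_left
  disjoint := h.disjoint.symm
  mem_left := h.mem_right
  mem_right := h.mem_left

lemma compl_closure_right_mem (h : IsHemispherePair e₁ e₂ U V) : (closure V)ᶜ ∈ e₁ :=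
  mem_of_superset h.mem_left (h.disjoint.closure_right h.isOpen_left).subset_compl_right

lemma subset_endComponent_left [NeBot e₁] (h : IsHemispherePair e₁ e₂ U V) :
    U ⊆ endComponent e₁ V :=
  subset_endComponent h.isPreconnected_left h.mem_left (h.disjoint.closure_right h.isOpen_left)

lemma eq_left_of_subset [NeBot e₁] (h' : IsHemispherePair e₁ e₂ U' V') (hU : U ⊆ U')
    (hV : V ⊆ V') (hUV : endComponent e₁ V = U) : U' = U :=
  (h'.subset_endComponent_left.trans ((endComponent_anti hV).trans hUV.subset)).antisymm hU

lemma connectedComponentIn_union_eq_left (h : IsHemispherePair e₁ e₂ U V) {z : Z} (hz : z ∈ U) :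
    connectedComponentIn (U ∪ V) z = U :=
  Set.Subset.antisymm
    (isPreconnected_connectedComponentIn.subset_left_of_subset_union h.isOpen_left h.isOpen_right
      h.disjoint (connectedComponentIn_subset _ _) ⟨z, mem_connectedComponentIn (Or.inl hz), hz⟩)
    (h.isPreconnected_left.subset_connectedComponentIn hz Set.subset_union_left)

lemma connectedComponentIn_union_eq_right (h : IsHemispherePair e₁ e₂ U V) {z : Z} (hz : z ∈ V) :
    connectedComponentIn (U ∪ V) z = V := by
  rw [Set.union_comm, h.symm.connectedComponentIn_union_eq_left hz]

lemma nonempty_compl_union [PreconnectedSpace Z] [NeBot e₁] [NeBot e₂]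
    (h : IsHemispherePair e₁ e₂ U V) : ((U ∪ V)ᶜ).Nonempty := by
  rw [Set.nonempty_compl]
  intro huniv
  have hinter : (U ∩ V).Nonempty := nonempty_inter h.isOpen_left h.isOpen_right huniv
    (nonempty_of_mem h.mem_left) (nonempty_of_mem h.mem_right)
  exact Set.not_disjoint_iff_nonempty_inter.2 hinter h.disjoint

variable [LocallyConnectedSpace Z] [IsConnectedEnd e₁]

lemma endComponent_left (h : IsHemispherePair e₁ e₂ U V) :
    IsHemispherePair e₁ e₂ (endComponent e₁ V) V where
  isOpen_left := isOpen_endComponent h.compl_closure_right_mem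
  isOpen_right := h.isOpen_right
  isPreconnected_left := isPreconnected_endComponent h.compl_closure_right_mem
  isPreconnected_right := h.isPreconnected_right
  disjoint := disjoint_endComponent
  mem_left := endComponent_mem h.compl_closure_right_mem
  mem_right := h.mem_right

lemma isPreconnected_compl_endComponent_left [PreconnectedSpace Z] [NeBot e₂]
    (h : IsHemispherePair e₁ e₂ U V) : IsPreconnected (endComponent e₁ V)ᶜ :=
  isPreconnected_compl_endComponent h.compl_closure_right_mem
    ⟨nonempty_of_mem h.mem_right, h.isPreconnected_right⟩

lemma exists_isPreconnected_compl_superset [PreconnectedSpace Z] [IsConnectedEnd e₂]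
    (h : IsHemispherePair e₁ e₂ U V) :
    ∃ V', IsHemispherePair e₁ e₂ (endComponent e₁ V) V' ∧ V ⊆ V' ∧
      IsPreconnected (endComponent e₁ V)ᶜ ∧ IsPreconnected V'ᶜ :=
  ⟨endComponent e₂ (endComponent e₁ V), h.endComponent_left.symm.endComponent_left.symm,
    h.endComponent_left.symm.subset_endComponent_left, h.isPreconnected_compl_endComponent_left,
    h.endComponent_left.symm.isPreconnected_compl_endComponent_left⟩

end IsHemispherePair

end HemispherePairs

section Annulus

/-- The filter of neighbourhoods of the upper end of the annulus. -/
abbrev upperEnd : Filter Ann := comap Prod.snd atTop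

/-- The filter of neighbourhoods of the lower end of the annulus. -/
abbrev lowerEnd : Filter Ann := comap Prod.snd atBot

instance : LocallyConnectedSpace (AddCircle (1 : ℝ)) :=
  inferInstanceAs (LocallyConnectedSpace (Quotient _))

lemma unbAbove_iff_frequently {S : Set Ann} : UnbAbove S ↔ ∃ᶠ p in upperEnd, p ∈ S := by
  simp only [UnbAbove, not_bddAbove_iff, frequently_comap, frequently_atTop', Set.mem_image,
    gt_iff_lt, and_comm]

lemma unbBelow_iff_frequently {S : Set Ann} : UnbBelow S ↔ ∃ᶠ p in lowerEnd, p ∈ S := by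
  simp only [UnbBelow, not_bddBelow_iff, frequently_comap, frequently_atBot', Set.mem_image,
    and_comm]

lemma upperComp_eq_endComponent (K : Set Ann) : upperComp K = endComponent upperEnd K :=
  Set.ext fun _ => and_congr_right' unbAbove_iff_frequently

lemma lowerComp_eq_endComponent (K : Set Ann) : lowerComp K = endComponent lowerEnd K :=
  Set.ext fun _ => and_congr_right' unbBelow_iff_frequently

namespace IsAnnularContinuum

variable {C : Set Ann}

lemma compl_closure_mem_upperEnd (hC : IsAnnularContinuum C) : (closure C)ᶜ ∈ upperEnd :=
  hC.1.isClosed.closure_eq.symm ▸ compl_mem_comap_snd_of_isCompact atTop_le_cocompact hC.1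

lemma compl_closure_mem_lowerEnd (hC : IsAnnularContinuum C) : (closure C)ᶜ ∈ lowerEnd :=
  hC.1.isClosed.closure_eq.symm ▸ compl_mem_comap_snd_of_isCompact atBot_le_cocompact hC.1

lemma upperComp_union_lowerComp (hC : IsAnnularContinuum C) : upperComp C ∪ lowerComp C = Cᶜ := by
  have hclosure : closure C = C := hC.1.isClosed.closure_eq
  refine Set.Subset.antisymm ?_ fun z hz => ?_
  · rintro z (hz | hz) hzC
    exacts [hz.1 (subset_closure hzC), hz.1 (subset_closure hzC)]
  · have hunbounded := not_and_or.1 (hC.2.2.1 z hz)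
    rw [← hclosure] at hz hunbounded
    exact hunbounded.imp (⟨hz, ·⟩) (⟨hz, ·⟩)

lemma not_isPreconnected_compl (hC : IsAnnularContinuum C) : ¬ IsPreconnected Cᶜ := by
  obtain ⟨-, -, -, x, y, hx, hy, hxy, -⟩ := hC
  exact fun h => hxy ((h.connectedComponentIn hx).trans (h.connectedComponentIn hy).symm)

lemma isHemispherePair (hC : IsAnnularContinuum C) :
    IsHemispherePair upperEnd lowerEnd (upperComp C) (lowerComp C) := by
  have hunion := hC.upperComp_union_lowerComp
  rw [upperComp_eq_endComponent, lowerComp_eq_endComponent] at *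
  have hU := isPreconnected_endComponent hC.compl_closure_mem_upperEnd
  have hL := isPreconnected_endComponent hC.compl_closure_mem_lowerEnd
  exact
    { isOpen_left := isOpen_endComponent hC.compl_closure_mem_upperEnd
      isOpen_right := isOpen_endComponent hC.compl_closure_mem_lowerEnd
      isPreconnected_left := hU
      isPreconnected_right := hL
      disjoint := Set.disjoint_left.2 fun z hzU hzL =>
        hC.not_isPreconnected_compl (hunion ▸ hU.union z hzU hzL hL)
      mem_left := endComponent_mem hC.compl_closure_mem_upperEnd
      mem_right := endComponent_mem hC.compl_closure_mem_lowerEnd }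

end IsAnnularContinuum

namespace IsHemispherePair

variable {U L : Set Ann}

lemma isCompact_compl_union (h : IsHemispherePair upperEnd lowerEnd U L) :
    IsCompact (U ∪ L)ᶜ := by
  obtain ⟨s, hs, hsU⟩ := mem_comap.1 h.mem_left
  obtain ⟨t, ht, htL⟩ := mem_comap.1 h.mem_right
  obtain ⟨M, hM⟩ := mem_atTop_sets.1 hs
  obtain ⟨m, hm⟩ := mem_atBot_sets.1 ht
  refine (isCompact_univ.prod (isCompact_Icc (a := m) (b := M))).of_isClosed_subset
    (h.isOpen_left.union h.isOpen_right).isClosed_compl fun p hp => ⟨trivial, ?_, ?_⟩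
  · exact le_of_not_ge fun hpm => hp (Or.inr (htL (hm _ hpm)))
  · exact le_of_not_ge fun hpM => hp (Or.inl (hsU (hM _ hpM)))

lemma isPreconnected_compl_union (h : IsHemispherePair upperEnd lowerEnd U L)
    (hU : IsPreconnected Uᶜ) (hL : IsPreconnected Lᶜ) : IsPreconnected (U ∪ L)ᶜ := by
  obtain ⟨s, hs, hsU⟩ := mem_comap.1 h.mem_left
  obtain ⟨m, hm⟩ := nonempty_of_mem hs
  rw [Set.compl_union]
  refine isPreconnected_inter_of_disjoint_of_homotopic_id (K := Prod.snd ⁻¹' {m})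
    h.isOpen_left.isClosed_compl h.isOpen_right.isClosed_compl hU hL ?_
    (isClosed_singleton.preimage continuous_snd) ?_ (id_prodMap_const_homotopic_id _ m) fun _ => rfl
  · rw [← Set.compl_inter, h.disjoint.inter_eq, Set.compl_empty]
  · exact Set.disjoint_left.2 fun p hp hpUL =>
      hpUL.1 (hsU (Set.mem_preimage.2 (Set.mem_singleton_iff.1 hp ▸ hm)))

theorem isAnnularContinuum_compl_union (h : IsHemispherePair upperEnd lowerEnd U L)
    (hU : IsPreconnected Uᶜ) (hL : IsPreconnected Lᶜ) : IsAnnularContinuum (U ∪ L)ᶜ := by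
  obtain ⟨x, hx⟩ := nonempty_of_mem h.mem_left
  obtain ⟨y, hy⟩ := nonempty_of_mem h.mem_right
  refine ⟨h.isCompact_compl_union, ⟨h.nonempty_compl_union, h.isPreconnected_compl_union hU hL⟩, ?_⟩
  rw [compl_compl]
  refine ⟨?_, x, y, Or.inl hx, Or.inr hy, ?_, ?_⟩
  · rintro z (hz | hz) hbounded
    · rw [h.connectedComponentIn_union_eq_left hz] at hbounded
      exact unbAbove_iff_frequently.2 (Eventually.frequently h.mem_left) hbounded.1
    · rw [h.connectedComponentIn_union_eq_right hz] at hbounded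
      exact unbBelow_iff_frequently.2 (Eventually.frequently h.mem_right) hbounded.2
  · rw [h.connectedComponentIn_union_eq_left hx, h.connectedComponentIn_union_eq_right hy]
    exact h.disjoint.ne (Set.nonempty_iff_ne_empty.1 ⟨x, hx⟩)
  · rw [h.connectedComponentIn_union_eq_left hx, h.connectedComponentIn_union_eq_right hy]
    exact fun z hz => hz.imp h.connectedComponentIn_union_eq_left
      h.connectedComponentIn_union_eq_right

end IsHemispherePair

lemma IsCircloidA.eq_and_eq_of_subset {C U L : Set Ann} (hC : IsCircloidA C)
    (h : IsHemispherePair upperEnd lowerEnd U L) (hU : upperComp C ⊆ U) (hL : lowerComp C ⊆ L)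
    (hUc : IsPreconnected Uᶜ) (hLc : IsPreconnected Lᶜ) : U = upperComp C ∧ L = lowerComp C := by
  have hunion : upperComp C ∪ lowerComp C = Cᶜ := hC.1.upperComp_union_lowerComp
  have hsub : (U ∪ L)ᶜ ⊆ C :=
    Set.compl_subset_comm.1 (hunion ▸ Set.union_subset_union hU hL)
  have heq : (U ∪ L)ᶜ = C := hC.2 _ hsub (h.isAnnularContinuum_compl_union hUc hLc)
  exact eq_and_eq_of_disjoint_of_union_eq h.disjoint hU hL (hunion ▸ heq ▸ (compl_compl _).symm)

lemma IsCircloidA.upperComp_lowerComp {C : Set Ann} (hC : IsCircloidA C) :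
    upperComp (lowerComp C) = upperComp C := by
  have h := hC.1.isHemispherePair
  obtain ⟨L, hL, hLsub, hUc, hLc⟩ := h.exists_isPreconnected_compl_superset
  rw [upperComp_eq_endComponent (lowerComp C)]
  exact (hC.eq_and_eq_of_subset hL h.subset_endComponent_left hLsub hUc hLc).1

lemma IsCircloidA.lowerComp_upperComp {C : Set Ann} (hC : IsCircloidA C) :
    lowerComp (upperComp C) = lowerComp C := by
  have h := hC.1.isHemispherePair.symm
  obtain ⟨U, hU, hUsub, hLc, hUc⟩ := h.exists_isPreconnected_compl_superset
  rw [lowerComp_eq_endComponent (upperComp C)]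
  exact (hC.eq_and_eq_of_subset hU.symm hUsub h.subset_endComponent_left hUc hLc).2

lemma IsAnnularContinuum.isCircloidA_of_reflexive {C : Set Ann} (hC : IsAnnularContinuum C)
    (hU : upperComp (lowerComp C) = upperComp C) (hL : lowerComp (upperComp C) = lowerComp C) :
    IsCircloidA C := by
  refine ⟨hC, fun E hEC hE => ?_⟩
  rw [upperComp_eq_endComponent (lowerComp C)] at hU
  rw [lowerComp_eq_endComponent (upperComp C)] at hL
  have hUsub : upperComp C ⊆ upperComp E := by
    simpa only [upperComp_eq_endComponent] using endComponent_anti hEC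
  have hLsub : lowerComp C ⊆ lowerComp E := by
    simpa only [lowerComp_eq_endComponent] using endComponent_anti hEC
  have hUeq : upperComp E = upperComp C := hE.isHemispherePair.eq_left_of_subset hUsub hLsub hU
  have hLeq : lowerComp E = lowerComp C :=
    hE.isHemispherePair.symm.eq_left_of_subset hLsub hUsub hL
  rw [← compl_inj_iff, ← hE.upperComp_union_lowerComp, ← hC.upperComp_union_lowerComp, hUeq, hLeq]

end Annulus

/-- **Corollary 3.3.**  An annular continuum `C` is a circloid if and only if
`(𝒰(C), ℒ(C))` is a reflexive pair of hemispheres: `𝒰(ℒ(C)) = 𝒰(C)` and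
`ℒ(𝒰(C)) = ℒ(C)`. -/
theorem statement11 (C : Set Ann) (hC : IsAnnularContinuum C) :
    IsCircloidA C ↔
      (upperComp (lowerComp C) = upperComp C ∧ lowerComp (upperComp C) = lowerComp C) :=
  ⟨fun h => ⟨h.upperComp_lowerComp, h.lowerComp_upperComp⟩,
    fun ⟨hU, hL⟩ => hC.isCircloidA_of_reflexive hU hL⟩
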